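/- arXiv:1109.4353 — 2 statements merged into one kernel-verified Lean document; each statement's English description precedes it below -/
import Mathlib

section
/- Let t be a linear algebraic term (each variable occurs at most once in t) and σ a substitution such that tσ ▷β u. Then there is a substitution σ' such that u = tσ', σ(x) ▷β σ'(x) for all variables x, and σ'(x) = σ(x) for all variables x not free in t. -/
/-!
An algebraic term `t` cannot take part in a β-redex of `tσ`: applications
in `t` have a symbol-headed left side, and instances of symbol-headed terms are never
abstractions. So every parallel step from `tσ` goes componentwise down the applications of
`t` until it reaches a variable `x`, where it is a step from `σ x`. Linearity makes the reducts
found at different leaves compatible: the two sides of an application have disjoint free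
variables, so the substitutions obtained for them can be glued (`SpineAlg.exists_subst`).

This argument inverts the parallel reduction, which the closure of `PBeta` under substitution
obstructs. `SPBeta` drops that rule; it is still closed under substitution
(`SPBeta.subst`, from the substitution lemma `Tm.subst_subst1`), so it equals `PBeta`.
-/

set_option autoImplicit false

/-- λ-terms over a signature `Sig`, in de Bruijn representation
(terms are identified up to α-conversion). -/
inductive Tm (Sig : Type) : Type
  | var : ℕ → Tm Sig
  | app : Tm Sig → Tm Sig → Tm Sig
  | lam : Tm Sig → Tm Sig
  | sym : Sig → Tm Sig

namespace Tm

variable {Sig : Type}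

/-- Shift the free de Bruijn indices `≥ d` up by one. -/
def lift (d : ℕ) : Tm Sig → Tm Sig
  | var n => if n < d then var n else var (n + 1)
  | app t u => app (lift d t) (lift d u)
  | lam t => lam (lift (d + 1) t)
  | sym f => sym f

/-- Lift a parallel substitution under one binder. -/
def up (σ : ℕ → Tm Sig) : ℕ → Tm Sig
  | 0 => var 0
  | n + 1 => lift 0 (σ n)

/-- Capture-avoiding (parallel) substitution. -/
def subst (σ : ℕ → Tm Sig) : Tm Sig → Tm Sig
  | var n => σ n
  | app t u => app (subst σ t) (subst σ u)
  | lam t => lam (subst (up σ) t)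
  | sym f => sym f

def scons (u : Tm Sig) (σ : ℕ → Tm Sig) : ℕ → Tm Sig
  | 0 => u
  | n + 1 => σ n

/-- `subst1 u t` substitutes `u` for the de Bruijn variable `0` in `t`. -/
def subst1 (u t : Tm Sig) : Tm Sig := subst (scons u var) t

/-- `FVar t n` : de Bruijn index `n` occurs free in `t`. -/
def FVar : Tm Sig → ℕ → Prop
  | var m, n => m = n
  | app t u, n => FVar t n ∨ FVar u n
  | lam t, n => FVar t (n + 1)
  | sym _, _ => False

/-- Closed terms. -/
def ClosedTm (t : Tm Sig) : Prop := ∀ n, ¬ FVar t n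

def countVar : Tm Sig → ℕ → ℕ
  | var m, n => if m = n then 1 else 0
  | app t u, n => countVar t n + countVar u n
  | lam t, n => countVar t (n + 1)
  | sym _, _ => 0

/-- Linear terms: each variable occurs at most once. -/
def LinearTm (t : Tm Sig) : Prop := ∀ n, countVar t n ≤ 1

/-- `appList h [t1, …, tn] = h t1 … tn`. -/
def appList (h : Tm Sig) : List (Tm Sig) → Tm Sig
  | [] => h
  | u :: us => appList (app h u) us

/-- Applicative terms: terms containing no abstraction. -/
inductive Applicative : Tm Sig → Prop
  | var (n : ℕ) : Applicative (var n)
  | sym (f : Sig) : Applicative (sym f)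
  | app {t u : Tm Sig} : Applicative t → Applicative u → Applicative (app t u)

/-- Algebraic terms: `t ::= x | f t1 … tn`. -/
inductive Algebraic : Tm Sig → Prop
  | var (n : ℕ) : Algebraic (var n)
  | symApp (f : Sig) (ts : List (Tm Sig)) :
      (∀ t ∈ ts, Algebraic t) → Algebraic (appList (sym f) ts)

/-- `Subterm s t` : `s` is a subterm of `t`. -/
inductive Subterm : Tm Sig → Tm Sig → Prop
  | refl (t : Tm Sig) : Subterm t t
  | appL {s t u : Tm Sig} : Subterm s t → Subterm s (app t u)
  | appR {s t u : Tm Sig} : Subterm s u → Subterm s (app t u)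
  | lam {s t : Tm Sig} : Subterm s t → Subterm s (lam t)

/-- `lamN m t = λ…λ.t` with `m` abstractions. -/
def lamN : ℕ → Tm Sig → Tm Sig
  | 0, t => t
  | m + 1, t => lam (lamN m t)

end Tm

/-- β-reduction: the smallest rewrite relation (closed under abstraction, left and
right application and substitution) with `(λ.t) u →β t[0 := u]`. -/
inductive Beta {Sig : Type} : Tm Sig → Tm Sig → Prop
  | beta (t u : Tm Sig) : Beta (Tm.app (Tm.lam t) u) (Tm.subst1 u t)
  | abs {t u : Tm Sig} : Beta t u → Beta (Tm.lam t) (Tm.lam u)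
  | appL {t u v : Tm Sig} : Beta t u → Beta (Tm.app t v) (Tm.app u v)
  | appR {t u v : Tm Sig} : Beta t u → Beta (Tm.app v t) (Tm.app v u)
  | substC (σ : ℕ → Tm Sig) {t u : Tm Sig} : Beta t u → Beta (Tm.subst σ t) (Tm.subst σ u)

/-- Tait–Martin-Löf parallel β-reduction: the smallest parallel rewrite relation
with `(λ.t₁) t₂ ▷β u₁[0 := u₂]` whenever `t₁ ▷β u₁` and `t₂ ▷β u₂`. -/
inductive PBeta {Sig : Type} : Tm Sig → Tm Sig → Prop
  | var (n : ℕ) : PBeta (Tm.var n) (Tm.var n)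
  | sym (f : Sig) : PBeta (Tm.sym f) (Tm.sym f)
  | app {t₁ u₁ t₂ u₂ : Tm Sig} : PBeta t₁ u₁ → PBeta t₂ u₂ →
      PBeta (Tm.app t₁ t₂) (Tm.app u₁ u₂)
  | abs {t u : Tm Sig} : PBeta t u → PBeta (Tm.lam t) (Tm.lam u)
  | substC (σ : ℕ → Tm Sig) {t u : Tm Sig} : PBeta t u → PBeta (Tm.subst σ t) (Tm.subst σ u)
  | beta {t₁ u₁ t₂ u₂ : Tm Sig} : PBeta t₁ u₁ → PBeta t₂ u₂ →
      PBeta (Tm.app (Tm.lam t₁) t₂) (Tm.subst1 u₂ u₁)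

/-- β-normal forms. -/
def BetaNormal {Sig : Type} (t : Tm Sig) : Prop := ∀ u, ¬ Beta t u

/-- `IsBnf t n` : `n` is a β-normal form of `t`. -/
def IsBnf {Sig : Type} (t n : Tm Sig) : Prop :=
  Relation.ReflTransGen Beta t n ∧ BetaNormal n

/-- Weakly β-normalizing terms. -/
def WNbeta {Sig : Type} (t : Tm Sig) : Prop := ∃ n, IsBnf t n

/-- Conditional rewrite rule `d1 = c1 ∧ … ∧ dn = cn ⊃ l ↦ r`:  every variable of
the `di`, `ci` and `r` occurs in `l`, and `l` is a non-variable algebraic term. -/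
structure CondRule (Sig : Type) where
  conds : List (Tm Sig × Tm Sig)
  lhs : Tm Sig
  rhs : Tm Sig
  lhs_alg : Tm.Algebraic lhs
  lhs_not_var : ∀ n, lhs ≠ Tm.var n
  fv_conds : ∀ p ∈ conds,
    (∀ n, Tm.FVar p.1 n → Tm.FVar lhs n) ∧ (∀ n, Tm.FVar p.2 n → Tm.FVar lhs n)
  fv_rhs : ∀ n, Tm.FVar rhs n → Tm.FVar lhs n

/-- Joinability: a common reduct. -/
def Joinable {α : Type} (R : α → α → Prop) (t u : α) : Prop :=
  ∃ v, Relation.ReflTransGen R t v ∧ Relation.ReflTransGen R u v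

/-- One stratum of conditional rewriting: the smallest rewrite relation such that
`lσ → rσ` for every rule whose conditions are joinable w.r.t. `prev`. -/
inductive CondStep {Sig : Type} (Rules : Set (CondRule Sig))
    (prev : Tm Sig → Tm Sig → Prop) : Tm Sig → Tm Sig → Prop
  | rule {ρ : CondRule Sig} (hρ : ρ ∈ Rules) (σ : ℕ → Tm Sig)
      (hconds : ∀ p ∈ ρ.conds, Joinable prev (Tm.subst σ p.1) (Tm.subst σ p.2)) :
      CondStep Rules prev (Tm.subst σ ρ.lhs) (Tm.subst σ ρ.rhs)
  | abs {t u : Tm Sig} : CondStep Rules prev t u →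
      CondStep Rules prev (Tm.lam t) (Tm.lam u)
  | appL {t u v : Tm Sig} : CondStep Rules prev t u →
      CondStep Rules prev (Tm.app t v) (Tm.app u v)
  | appR {t u v : Tm Sig} : CondStep Rules prev t u →
      CondStep Rules prev (Tm.app v t) (Tm.app v u)
  | substC (σ : ℕ → Tm Sig) {t u : Tm Sig} : CondStep Rules prev t u →
      CondStep Rules prev (Tm.subst σ t) (Tm.subst σ u)

/-- Stratified conditional rewriting `→_{R_i}`. -/
def CondRel {Sig : Type} (Rules : Set (CondRule Sig)) : ℕ → Tm Sig → Tm Sig → Prop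
  | 0 => fun _ _ => False
  | i + 1 => CondStep Rules (CondRel Rules i)

/-- Conditional rewriting `→_R = ⋃ i, →_{R_i}`. -/
def CondRew {Sig : Type} (Rules : Set (CondRule Sig)) (t u : Tm Sig) : Prop :=
  ∃ i, CondRel Rules i t u

/-- Stratified β-conditional rewriting `→_{R(β)_i}`: conditions are evaluated
w.r.t. `→_{β ∪ R(β)_{i-1}}`. -/
def BCondRel {Sig : Type} (Rules : Set (CondRule Sig)) : ℕ → Tm Sig → Tm Sig → Prop
  | 0 => fun _ _ => False
  | i + 1 => CondStep Rules (fun a b => Beta a b ∨ BCondRel Rules i a b)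

/-- β-conditional rewriting `→_{R(β)} = ⋃ i, →_{R(β)_i}`. -/
def BCondRew {Sig : Type} (Rules : Set (CondRule Sig)) (t u : Tm Sig) : Prop :=
  ∃ i, BCondRel Rules i t u

def IsConfluent {α : Type} (R : α → α → Prop) : Prop :=
  ∀ t u v, Relation.ReflTransGen R t u → Relation.ReflTransGen R t v →
    ∃ w, Relation.ReflTransGen R u w ∧ Relation.ReflTransGen R v w

def ConfluentOn {α : Type} (S : Set α) (R : α → α → Prop) : Prop :=
  ∀ t ∈ S, ∀ u v, Relation.ReflTransGen R t u → Relation.ReflTransGen R t v →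
    ∃ w, Relation.ReflTransGen R u w ∧ Relation.ReflTransGen R v w

def Commutes {α : Type} (R₁ R₂ : α → α → Prop) : Prop :=
  ∀ s u t, Relation.ReflTransGen R₁ s u → Relation.ReflTransGen R₂ s t →
    ∃ v, Relation.ReflTransGen R₂ u v ∧ Relation.ReflTransGen R₁ t v

def LeftLinear {Sig : Type} (Rules : Set (CondRule Sig)) : Prop :=
  ∀ ρ ∈ Rules, Tm.LinearTm ρ.lhs

/-- Semi-closed systems: in every rule the `ci` are closed applicative terms. -/
def SemiClosed {Sig : Type} (Rules : Set (CondRule Sig)) : Prop :=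
  ∀ ρ ∈ Rules, ∀ p ∈ ρ.conds, Tm.Applicative p.2 ∧ Tm.ClosedTm p.2

def RightApplicative {Sig : Type} (Rules : Set (CondRule Sig)) : Prop :=
  ∀ ρ ∈ Rules, Tm.Applicative ρ.rhs

def RightAlgebraic {Sig : Type} (Rules : Set (CondRule Sig)) : Prop :=
  ∀ ρ ∈ Rules, Tm.Algebraic ρ.rhs

/-- Algebraic systems: in every rule the `di`, `ci` and `r` are algebraic. -/
def AlgebraicSys {Sig : Type} (Rules : Set (CondRule Sig)) : Prop :=
  ∀ ρ ∈ Rules, (∀ p ∈ ρ.conds, Tm.Algebraic p.1 ∧ Tm.Algebraic p.2) ∧ Tm.Algebraic ρ.rhs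

/-- A term respects the arity `a` if it contains no subterm `f t1 … tn` with `n > a f`. -/
def RespectsArity {Sig : Type} (a : Sig → ℕ) (t : Tm Sig) : Prop :=
  ∀ (f : Sig) (ts : List (Tm Sig)),
    Tm.Subterm (Tm.appList (Tm.sym f) ts) t → ts.length ≤ a f

/-- A conditional rule respects `a` if the `di`, `ci` and both sides of `l ↦ r`
respect `a`, and `l = f l1 … lk` with `k = a f`. -/
def RuleRespectsArity {Sig : Type} (a : Sig → ℕ) (ρ : CondRule Sig) : Prop :=
  (∀ p ∈ ρ.conds, RespectsArity a p.1 ∧ RespectsArity a p.2) ∧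
  RespectsArity a ρ.lhs ∧ RespectsArity a ρ.rhs ∧
  ∃ (f : Sig) (ls : List (Tm Sig)), ρ.lhs = Tm.appList (Tm.sym f) ls ∧ ls.length = a f

def SysRespectsArity {Sig : Type} (a : Sig → ℕ) (Rules : Set (CondRule Sig)) : Prop :=
  ∀ ρ ∈ Rules, RuleRespectsArity a ρ

/-- `AN_a` : terms having a β-normal form, whose β-normal form respects `a`. -/
def ANset {Sig : Type} (a : Sig → ℕ) : Set (Tm Sig) :=
  {t | ∃ n, IsBnf t n ∧ RespectsArity a n}

/-- The rewrite relation of the unconditional system `R̄` containing `l ↦ di` and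
`l ↦ r` for each rule `d⃗ = c⃗ ⊃ l ↦ r` of `R`. -/
inductive BarRel {Sig : Type} (Rules : Set (CondRule Sig)) : Tm Sig → Tm Sig → Prop
  | ruleCond {ρ : CondRule Sig} (hρ : ρ ∈ Rules) {p : Tm Sig × Tm Sig} (hp : p ∈ ρ.conds)
      (σ : ℕ → Tm Sig) : BarRel Rules (Tm.subst σ ρ.lhs) (Tm.subst σ p.1)
  | ruleRhs {ρ : CondRule Sig} (hρ : ρ ∈ Rules) (σ : ℕ → Tm Sig) :
      BarRel Rules (Tm.subst σ ρ.lhs) (Tm.subst σ ρ.rhs)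
  | abs {t u : Tm Sig} : BarRel Rules t u → BarRel Rules (Tm.lam t) (Tm.lam u)
  | appL {t u v : Tm Sig} : BarRel Rules t u → BarRel Rules (Tm.app t v) (Tm.app u v)
  | appR {t u v : Tm Sig} : BarRel Rules t u → BarRel Rules (Tm.app v t) (Tm.app v u)
  | substC (σ : ℕ → Tm Sig) {t u : Tm Sig} : BarRel Rules t u →
      BarRel Rules (Tm.subst σ t) (Tm.subst σ u)

/-- Conditionally `(R, a)`-stable sets of terms. -/
def CondStable {Sig : Type} (Rules : Set (CondRule Sig)) (a : Sig → ℕ)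
    (S : Set (Tm Sig)) : Prop :=
  (∀ t ∈ S, RespectsArity a t) ∧
  (∀ t ∈ S, ∀ u, (Beta t u ∨ BarRel Rules t u) → u ∈ S) ∧
  (∀ t ∈ S, ∀ u, Tm.Subterm u t → u ∈ S)

/-- Head β-step along an application spine. -/
inductive HeadAux {Sig : Type} : Tm Sig → Tm Sig → Prop
  | beta (b a₀ : Tm Sig) : HeadAux (Tm.app (Tm.lam b) a₀) (Tm.subst1 a₀ b)
  | app {t u : Tm Sig} (v : Tm Sig) : HeadAux t u → HeadAux (Tm.app t v) (Tm.app u v)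

/-- Head β-reduction `→h` : `λx⃗.(λy.b) a₀ a₁ … aₙ →h λx⃗.b[y:=a₀] a₁ … aₙ`. -/
inductive HeadRed {Sig : Type} : Tm Sig → Tm Sig → Prop
  | base {t u : Tm Sig} : HeadAux t u → HeadRed t u
  | lam {t u : Tm Sig} : HeadRed t u → HeadRed (Tm.lam t) (Tm.lam u)

/-- The relation `≻` : (a) `λx⃗.v a1 … an ≻ ai` for `v` a variable or a symbol and
`n > 0`; (b) `λx⃗.(λy.b) a0 a1 … an ≻ λx⃗.b[y:=a0] a1 … an` (a head β-step). -/
def SuccRel {Sig : Type} (t u : Tm Sig) : Prop :=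
  (∃ (m : ℕ) (h : Tm Sig) (args : List (Tm Sig)),
    ((∃ n, h = Tm.var n) ∨ (∃ f, h = Tm.sym f)) ∧ args ≠ [] ∧
    t = Tm.lamN m (Tm.appList h args) ∧ u ∈ args)
  ∨ HeadRed t u

/-- The nested parallelization `▷_{R_i}` of `→_{R_i}`: the smallest parallel rewrite
relation with `lσ ▷ rτ` whenever `lσ →_{R_i} rσ` and `σ ▷ τ`. -/
inductive NPar {Sig : Type} (Rules : Set (CondRule Sig)) (i : ℕ) : Tm Sig → Tm Sig → Prop
  | var (n : ℕ) : NPar Rules i (Tm.var n) (Tm.var n)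
  | sym (f : Sig) : NPar Rules i (Tm.sym f) (Tm.sym f)
  | app {t₁ u₁ t₂ u₂ : Tm Sig} : NPar Rules i t₁ u₁ → NPar Rules i t₂ u₂ →
      NPar Rules i (Tm.app t₁ t₂) (Tm.app u₁ u₂)
  | abs {t u : Tm Sig} : NPar Rules i t u → NPar Rules i (Tm.lam t) (Tm.lam u)
  | substC (σ : ℕ → Tm Sig) {t u : Tm Sig} : NPar Rules i t u →
      NPar Rules i (Tm.subst σ t) (Tm.subst σ u)
  | rule {ρ : CondRule Sig} (hρ : ρ ∈ Rules) (σ τ : ℕ → Tm Sig)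
      (hstep : CondRel Rules i (Tm.subst σ ρ.lhs) (Tm.subst σ ρ.rhs))
      (hστ : ∀ n, NPar Rules i (σ n) (τ n)) :
      NPar Rules i (Tm.subst σ ρ.lhs) (Tm.subst τ ρ.rhs)

/-- The smallest parallel rewrite relation containing `R`. -/
inductive ParCl {Sig : Type} (R : Tm Sig → Tm Sig → Prop) : Tm Sig → Tm Sig → Prop
  | base {t u : Tm Sig} : R t u → ParCl R t u
  | var (n : ℕ) : ParCl R (Tm.var n) (Tm.var n)
  | sym (f : Sig) : ParCl R (Tm.sym f) (Tm.sym f)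
  | app {t₁ u₁ t₂ u₂ : Tm Sig} : ParCl R t₁ u₁ → ParCl R t₂ u₂ →
      ParCl R (Tm.app t₁ t₂) (Tm.app u₁ u₂)
  | abs {t u : Tm Sig} : ParCl R t u → ParCl R (Tm.lam t) (Tm.lam u)
  | substC (σ : ℕ → Tm Sig) {t u : Tm Sig} : ParCl R t u →
      ParCl R (Tm.subst σ t) (Tm.subst σ u)

/-- A rooted β-conditional rewrite step `lσ →_{R(β)_i} rσ` for the rule `ρ` and the
substitution `σ`: `ρ ∈ R` and the conditions of `ρ` instantiated by `σ` are joinable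
w.r.t. `→_{β ∪ R(β)_{i-1}}`. -/
def RootedBStep {Sig : Type} (Rules : Set (CondRule Sig)) :
    ℕ → CondRule Sig → (ℕ → Tm Sig) → Prop
  | 0 => fun _ _ => False
  | i + 1 => fun ρ σ => ρ ∈ Rules ∧
      ∀ p ∈ ρ.conds,
        Joinable (fun a b => Beta a b ∨ BCondRel Rules i a b)
          (Tm.subst σ p.1) (Tm.subst σ p.2)

/-- Subterm at a position (positions only descend through applications, which is
enough for algebraic left-hand sides). -/
def subtermAt {Sig : Type} : Tm Sig → List Bool → Option (Tm Sig)
  | t, [] => some t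
  | Tm.app a _, false :: p => subtermAt a p
  | Tm.app _ b, true :: p => subtermAt b p
  | _, _ :: _ => none

/-- Replacement at a position. -/
def replaceAt {Sig : Type} : Tm Sig → List Bool → Tm Sig → Option (Tm Sig)
  | _, [], s => some s
  | Tm.app a b, false :: p, s => (replaceAt a p s).map (fun a' => Tm.app a' b)
  | Tm.app a b, true :: p, s => (replaceAt b p s).map (fun b' => Tm.app a b')
  | _, _ :: _, _ => none

/-- Conditional critical pairs: an overlap of `ρ₂` at a non-variable position `p` of
the left-hand side of `ρ₁` via a most general unifier (here presented with a pair of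
substitutions, which accounts for variable-disjoint renamings). -/
def CriticalPair {Sig : Type} (Rules : Set (CondRule Sig))
    (conds : List (Tm Sig × Tm Sig)) (s t : Tm Sig) : Prop :=
  ∃ ρ₁ ∈ Rules, ∃ ρ₂ ∈ Rules, ∃ (p : List Bool) (w : Tm Sig) (σ₁ σ₂ : ℕ → Tm Sig),
    subtermAt ρ₁.lhs p = some w ∧
    (∀ n, w ≠ Tm.var n) ∧
    ¬ (ρ₁ = ρ₂ ∧ p = []) ∧
    Tm.subst σ₁ w = Tm.subst σ₂ ρ₂.lhs ∧
    (∀ τ₁ τ₂ : ℕ → Tm Sig, Tm.subst τ₁ w = Tm.subst τ₂ ρ₂.lhs →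
      ∃ δ : ℕ → Tm Sig, (∀ n, Tm.FVar ρ₁.lhs n → τ₁ n = Tm.subst δ (σ₁ n)) ∧
        (∀ n, Tm.FVar ρ₂.lhs n → τ₂ n = Tm.subst δ (σ₂ n))) ∧
    conds = ρ₁.conds.map (fun q => (Tm.subst σ₁ q.1, Tm.subst σ₁ q.2)) ++
            ρ₂.conds.map (fun q => (Tm.subst σ₂ q.1, Tm.subst σ₂ q.2)) ∧
    replaceAt (Tm.subst σ₁ ρ₁.lhs) p (Tm.subst σ₂ ρ₂.rhs) = some s ∧
    t = Tm.subst σ₁ ρ₁.rhs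

/-- A symbol is defined if it heads the left-hand side of some rule. -/
def DefinedSym {Sig : Type} (Rules : Set (CondRule Sig)) (f : Sig) : Prop :=
  ∃ ρ ∈ Rules, ∃ ts : List (Tm Sig), ρ.lhs = Tm.appList (Tm.sym f) ts

/-- OrthonormalSys systems. -/
def OrthonormalSys {Sig : Type} (Rules : Set (CondRule Sig)) : Prop :=
  LeftLinear Rules ∧
  (∀ ρ ∈ Rules, ∀ p ∈ ρ.conds, Tm.ClosedTm p.2 ∧ BetaNormal p.2 ∧
    ∀ f, DefinedSym Rules f → ¬ Tm.Subterm (Tm.sym f) p.2) ∧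
  (∀ (conds : List (Tm Sig × Tm Sig)) (s t : Tm Sig), CriticalPair Rules conds s t →
    ∃ i j : Fin conds.length, i ≠ j ∧
      (conds.get i).1 = (conds.get j).1 ∧ (conds.get i).2 ≠ (conds.get j).2)

/-- Dershowitz–Manna multiset extension of `<` on `ℕ`. -/
def MulLt (s t : Multiset ℕ) : Prop :=
  ∃ X Y Z : Multiset ℕ, Y ≠ 0 ∧ s = Z + X ∧ t = Z + Y ∧ ∀ x ∈ X, ∃ y ∈ Y, x < y

/-! ### Renamings and the substitution lemma -/

namespace Tm

variable {Sig : Type}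

/-- Lift a renaming of de Bruijn indices under one binder. -/
def upRen (ξ : ℕ → ℕ) : ℕ → ℕ
  | 0 => 0
  | n + 1 => ξ n + 1

/-- Renaming of the free de Bruijn indices. -/
def ren (ξ : ℕ → ℕ) : Tm Sig → Tm Sig
  | var n => var (ξ n)
  | app t u => app (ren ξ t) (ren ξ u)
  | lam t => lam (ren (upRen ξ) t)
  | sym f => sym f

theorem lift_eq_ren (t : Tm Sig) :
    ∀ d, lift d t = ren (fun n => if n < d then n else n + 1) t := by
  induction t with
  | var n => intro d; simp only [lift, ren]; split <;> rfl
  | app t u iht ihu => intro d; simp only [lift, ren, iht, ihu]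
  | lam t ih =>
    intro d
    simp only [lift, ren, ih]
    congr 2
    funext n
    cases n with
    | zero => simp [upRen]
    | succ n => by_cases h : n < d <;> simp [upRen, h]
  | sym f => intro d; rfl

theorem lift_zero_eq_ren (t : Tm Sig) : lift 0 t = ren Nat.succ t := by
  rw [lift_eq_ren]; rfl

theorem ren_ren (t : Tm Sig) : ∀ ξ ζ : ℕ → ℕ, ren ζ (ren ξ t) = ren (fun n => ζ (ξ n)) t := by
  induction t with
  | var n => intro ξ ζ; rfl
  | app t u iht ihu => intro ξ ζ; simp only [ren, iht, ihu]
  | lam t ih =>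
    intro ξ ζ
    simp only [ren, ih]
    congr 2
    funext n
    cases n <;> rfl
  | sym f => intro ξ ζ; rfl

theorem subst_ren (t : Tm Sig) : ∀ (ξ : ℕ → ℕ) (σ : ℕ → Tm Sig),
    subst σ (ren ξ t) = subst (fun n => σ (ξ n)) t := by
  induction t with
  | var n => intro ξ σ; rfl
  | app t u iht ihu => intro ξ σ; simp only [ren, subst, iht, ihu]
  | lam t ih =>
    intro ξ σ
    simp only [ren, subst, ih]
    congr 2
    funext n
    cases n <;> rfl
  | sym f => intro ξ σ; rfl

theorem ren_subst (t : Tm Sig) : ∀ (σ : ℕ → Tm Sig) (ξ : ℕ → ℕ),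
    ren ξ (subst σ t) = subst (fun n => ren ξ (σ n)) t := by
  induction t with
  | var n => intro σ ξ; rfl
  | app t u iht ihu => intro σ ξ; simp only [ren, subst, iht, ihu]
  | lam t ih =>
    intro σ ξ
    simp only [ren, subst, ih]
    congr 2
    funext n
    cases n with
    | zero => rfl
    | succ n => simp only [up, lift_zero_eq_ren, ren_ren]; rfl
  | sym f => intro σ ξ; rfl

theorem subst_subst (t : Tm Sig) : ∀ σ τ : ℕ → Tm Sig,
    subst τ (subst σ t) = subst (fun n => subst τ (σ n)) t := by
  induction t with
  | var n => intro σ τ; rfl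
  | app t u iht ihu => intro σ τ; simp only [subst, iht, ihu]
  | lam t ih =>
    intro σ τ
    simp only [subst, ih]
    congr 2
    funext n
    cases n with
    | zero => rfl
    | succ n =>
      simp only [up, lift_zero_eq_ren, subst_ren, ren_subst]
  | sym f => intro σ τ; rfl

/-- Substitutions that agree on the free variables of a term act equally on it. -/
theorem subst_congr_fvar (t : Tm Sig) : ∀ σ τ : ℕ → Tm Sig,
    (∀ n, FVar t n → σ n = τ n) → subst σ t = subst τ t := by
  induction t with
  | var n => intro σ τ h; exact h n rfl
  | app t u iht ihu =>
    intro σ τ h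
    simp only [subst]
    rw [iht σ τ fun n hn => h n (Or.inl hn), ihu σ τ fun n hn => h n (Or.inr hn)]
  | lam t ih =>
    intro σ τ h
    simp only [subst]
    rw [ih (up σ) (up τ)]
    intro n hn
    cases n with
    | zero => rfl
    | succ n => simp only [up, h n hn]
  | sym f => intro σ τ h; rfl

theorem subst_var (t : Tm Sig) : subst var t = t := by
  induction t with
  | var n => rfl
  | app t u iht ihu => simp only [subst, iht, ihu]
  | lam t ih =>
    have hup : up (var : ℕ → Tm Sig) = var := by
      funext n
      cases n <;> simp [up, lift]
    simp only [subst, hup, ih]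
  | sym f => rfl

/-- The substitution lemma `(t[0 := u])σ = (t(up σ))[0 := uσ]`. -/
theorem subst_subst1 (σ : ℕ → Tm Sig) (u t : Tm Sig) :
    subst σ (subst1 u t) = subst1 (subst σ u) (subst (up σ) t) := by
  simp only [subst1, subst_subst]
  congr 1
  funext n
  cases n with
  | zero => rfl
  | succ n =>
    simp only [scons, up, lift_zero_eq_ren, subst_ren, subst]
    exact (subst_var (σ n)).symm

theorem one_le_countVar_of_fvar (t : Tm Sig) : ∀ n, FVar t n → 1 ≤ countVar t n := by
  induction t with
  | var m => intro n h; simp only [FVar] at h; simp [countVar, h]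
  | app t u iht ihu =>
    intro n h
    simp only [countVar]
    rcases h with h | h
    · have := iht n h; omega
    · have := ihu n h; omega
  | lam t ih => intro n h; exact ih (n + 1) h
  | sym f => intro n h; exact h.elim

end Tm

/-! ### Parallel β-reduction without the substitution rule -/

section Syntactic

variable {Sig : Type}

/-- Parallel β-reduction presented without closure under substitution as a rule. Unlike
`PBeta`, this presentation is syntax-directed, so it can be inverted. -/
inductive SPBeta : Tm Sig → Tm Sig → Prop
  | var (n : ℕ) : SPBeta (Tm.var n) (Tm.var n)
  | sym (f : Sig) : SPBeta (Tm.sym f) (Tm.sym f)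
  | app {t₁ u₁ t₂ u₂ : Tm Sig} : SPBeta t₁ u₁ → SPBeta t₂ u₂ →
      SPBeta (Tm.app t₁ t₂) (Tm.app u₁ u₂)
  | abs {t u : Tm Sig} : SPBeta t u → SPBeta (Tm.lam t) (Tm.lam u)
  | beta {t₁ u₁ t₂ u₂ : Tm Sig} : SPBeta t₁ u₁ → SPBeta t₂ u₂ →
      SPBeta (Tm.app (Tm.lam t₁) t₂) (Tm.subst1 u₂ u₁)

theorem SPBeta.refl (t : Tm Sig) : SPBeta t t := by
  induction t with
  | var n => exact .var n
  | app t u iht ihu => exact .app iht ihu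
  | lam t ih => exact .abs ih
  | sym f => exact .sym f

theorem SPBeta.subst {t u : Tm Sig} (h : SPBeta t u) :
    ∀ σ : ℕ → Tm Sig, SPBeta (Tm.subst σ t) (Tm.subst σ u) := by
  induction h with
  | var n => intro σ; exact .refl _
  | sym f => intro σ; exact .refl _
  | app _ _ ih₁ ih₂ => intro σ; exact .app (ih₁ σ) (ih₂ σ)
  | abs _ ih => intro σ; exact .abs (ih _)
  | beta _ _ ih₁ ih₂ =>
    intro σ
    rw [Tm.subst_subst1]
    exact .beta (ih₁ _) (ih₂ σ)

theorem SPBeta.toPBeta {t u : Tm Sig} (h : SPBeta t u) : PBeta t u := by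
  induction h with
  | var n => exact .var n
  | sym f => exact .sym f
  | app _ _ ih₁ ih₂ => exact .app ih₁ ih₂
  | abs _ ih => exact .abs ih
  | beta _ _ ih₁ ih₂ => exact .beta ih₁ ih₂

theorem PBeta.toSPBeta {t u : Tm Sig} (h : PBeta t u) : SPBeta t u := by
  induction h with
  | var n => exact .var n
  | sym f => exact .sym f
  | app _ _ ih₁ ih₂ => exact .app ih₁ ih₂
  | abs _ ih => exact .abs ih
  | substC σ _ ih => exact ih.subst σ
  | beta _ _ ih₁ ih₂ => exact .beta ih₁ ih₂

end Syntactic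

/-! ### Algebraic terms, one application at a time -/

section Spine

variable {Sig : Type}

/-- Algebraic terms built by binary application. The flag is `true` for terms
`f t₁ … tₙ` headed by a symbol and `false` for variables; only the former may be applied. -/
inductive SpineAlg : Bool → Tm Sig → Prop
  | var (n : ℕ) : SpineAlg false (Tm.var n)
  | sym (f : Sig) : SpineAlg true (Tm.sym f)
  | app {b : Bool} {s t : Tm Sig} : SpineAlg true s → SpineAlg b t →
      SpineAlg true (Tm.app s t)

theorem SpineAlg.appList (ts : List (Tm Sig)) : ∀ h : Tm Sig, SpineAlg true h →
    (∀ t ∈ ts, ∃ b, SpineAlg b t) → SpineAlg true (Tm.appList h ts) := by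
  induction ts with
  | nil => intro h hh _; exact hh
  | cons t ts ih =>
    intro h hh hts
    obtain ⟨b, hb⟩ := hts t (by simp)
    exact ih _ (.app hh hb) fun s hs => hts s (by simp [hs])

theorem Tm.Algebraic.spineAlg {t : Tm Sig} (h : Tm.Algebraic t) : ∃ b, SpineAlg b t := by
  induction h with
  | var n => exact ⟨false, .var n⟩
  | symApp f ts _ ih => exact ⟨true, SpineAlg.appList ts _ (.sym f) ih⟩

/-- Instantiating a symbol-headed term never produces an abstraction, hence never creates
a β-redex when the result is applied. -/
theorem SpineAlg.subst_ne_lam {s : Tm Sig} (h : SpineAlg true s) (σ : ℕ → Tm Sig)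
    (t : Tm Sig) : Tm.subst σ s ≠ Tm.lam t := by
  cases h <;> simp [Tm.subst]

/-- The factorization of a reduct of `tσ` through a reduct of `σ`, for the syntax-directed
presentations of both notions. -/
theorem SpineAlg.exists_subst {b : Bool} {t : Tm Sig} (ht : SpineAlg b t) :
    Tm.LinearTm t → ∀ (σ : ℕ → Tm Sig) (u : Tm Sig), SPBeta (Tm.subst σ t) u →
    ∃ σ' : ℕ → Tm Sig, u = Tm.subst σ' t ∧ (∀ n, SPBeta (σ n) (σ' n)) ∧
      ∀ n, ¬ Tm.FVar t n → σ' n = σ n := by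
  classical
  induction ht with
  | var m =>
    intro _ σ u h
    refine ⟨Function.update σ m u, by simp [Tm.subst], fun n => ?_, fun n hn => ?_⟩
    · by_cases hnm : n = m
      · subst hnm; simpa [Tm.subst] using h
      · simpa [hnm] using SPBeta.refl (σ n)
    · exact Function.update_of_ne (fun hnm => hn hnm.symm) u σ
  | sym f =>
    intro _ σ u h
    cases h
    exact ⟨σ, rfl, fun n => .refl _, fun _ _ => rfl⟩
  | @app b s t hs _ ihs iht =>
    intro hlin σ u h
    have hadd : ∀ n, Tm.countVar s n + Tm.countVar t n ≤ 1 := hlin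
    have hls : Tm.LinearTm s := fun n => by have := hadd n; omega
    have hlt : Tm.LinearTm t := fun n => by have := hadd n; omega
    have hdisj : ∀ n, Tm.FVar t n → ¬ Tm.FVar s n := fun n h₁ h₂ => by
      have := hadd n
      have := Tm.one_le_countVar_of_fvar t n h₁
      have := Tm.one_le_countVar_of_fvar s n h₂
      omega
    simp only [Tm.subst] at h
    generalize hs' : Tm.subst σ s = s' at h
    cases h with
    | beta _ _ => exact (hs.subst_ne_lam σ _ hs').elim
    | app h₁ h₂ =>
      subst hs'
      obtain ⟨σ₁, rfl, hσ₁, hout₁⟩ := ihs hls σ _ h₁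
      obtain ⟨σ₂, rfl, hσ₂, hout₂⟩ := iht hlt σ _ h₂
      -- By linearity `s` and `t` share no variable, so `σ₁` and `σ₂` can be glued.
      refine ⟨fun n => if Tm.FVar s n then σ₁ n else σ₂ n, ?_, fun n => ?_, fun n hn => ?_⟩
      · simp only [Tm.subst]
        congr 1
        · exact Tm.subst_congr_fvar s _ _ fun n hn => by simp [hn]
        · exact Tm.subst_congr_fvar t _ _ fun n hn => by simp [hdisj n hn]
      · by_cases hn : Tm.FVar s n
        · simpa [hn] using hσ₁ n
        · simpa [hn] using hσ₂ n
      · simp only [Tm.FVar, not_or] at hn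
        simpa [hn.1] using hout₂ n hn.2

end Spine

/-- If `t` is a linear algebraic term and `tσ ▷β u`, then `u = tσ'`
for some `σ'` with `σ ▷β σ'` agreeing with `σ` outside the free variables of `t`. -/
theorem pbeta_linear_algebraic_subst {Sig : Type} (t : Tm Sig)
    (halg : Tm.Algebraic t) (hlin : Tm.LinearTm t)
    (σ : ℕ → Tm Sig) (u : Tm Sig) (h : PBeta (Tm.subst σ t) u) :
    ∃ σ' : ℕ → Tm Sig, u = Tm.subst σ' t ∧ (∀ n, PBeta (σ n) (σ' n)) ∧
      ∀ n, ¬ Tm.FVar t n → σ' n = σ n := by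
  obtain ⟨_, ht⟩ := halg.spineAlg
  obtain ⟨σ', hu, hσ, hout⟩ := ht.exists_subst hlin σ u h.toSPBeta
  exact ⟨σ', hu, fun n => (hσ n).toPBeta, hout⟩
end

section
/- If s ∈ WN_β and s ≻ t then t ∈ WN_β; moreover, the relation ≻ is well-founded on WN_β. -/
/-!
The terms in `WN_β` turn out to be exactly the terms accessible for `≻`; both claims follow at
once, since accessibility is inherited along `≻`.

* Accessible terms are weakly normalizing (`SuccWF.wn_of_acc`), by induction on accessibility: by
  Wadsworth's lemma (`SuccWF.wadsworth`) a term either has a head redex, and its head reduct is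
  normalizing by induction, or is `λx⃗.v a₁ … aₙ` with every `aᵢ` normalizing by induction.
  No confluence argument is needed.

* Weakly normalizing terms are accessible. This rests on standardization, in Kashima's form:
  `SuccWF.St t u` says that `t` reduces to `u` by weak head steps followed by standard reductions
  of the immediate components. Standard reductions absorb a further β-step on the right
  (`SuccWF.St.step`), so a term with normal form `n` satisfies `St t n`. By induction on this
  derivation (`SuccWF.St.acc`), `t` is accessible: weak head reduction is deterministic, and a
  weak head step is the only `≻`-step out of its source, so accessibility is stable under weak
  head expansion.

`Beta` is by definition closed under substitution, which obstructs inversion; `SuccWF.BetaC` is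
the same relation without that clause.
-/


set_option autoImplicit false

namespace SuccWF

open Tm Relation

variable {Sig : Type}

/-! ### Substitution calculus -/

/-- The substitution realizing `lift d`. -/
def shift (d n : ℕ) : Tm Sig := if n < d then var n else var (n + 1)

theorem up_shift (d : ℕ) : up (shift d : ℕ → Tm Sig) = shift (d + 1) := by
  funext n
  cases n with
  | zero => simp [up, shift]
  | succ n => by_cases h : n < d <;> simp [up, shift, h, lift]

theorem lift_eq_subst (t : Tm Sig) : ∀ d, lift d t = subst (shift d) t := by
  induction t with
  | var n => intro d; rfl
  | app t u iht ihu => intro d; simp [lift, subst, iht, ihu]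
  | lam t ih => intro d; simp [lift, subst, ih, up_shift]
  | sym f => intro d; rfl

theorem lift_lift (t : Tm Sig) : ∀ k d, k ≤ d →
    lift (d + 1) (lift k t) = lift k (lift d t) := by
  induction t with
  | var n =>
    intro k d h
    by_cases h1 : n < k
    · have h2 : n < d := by omega
      have h3 : n < d + 1 := by omega
      simp [lift, h1, h2, h3]
    · by_cases h2 : n < d
      · simp [lift, h1, h2]
      · have h3 : ¬ n + 1 < k := by omega
        simp [lift, h1, h2, h3]
  | app t u iht ihu => intro k d h; simp [lift, iht k d h, ihu k d h]
  | lam t ih => intro k d h; simp [lift, ih (k + 1) (d + 1) (by omega)]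
  | sym f => intro k d h; rfl

theorem subst_lift (t : Tm Sig) : ∀ (d : ℕ) (σ : ℕ → Tm Sig),
    subst σ (lift d t) = subst (fun n => if n < d then σ n else σ (n + 1)) t := by
  induction t with
  | var n => intro d σ; by_cases h : n < d <;> simp [lift, subst, h]
  | app t u iht ihu => intro d σ; simp [lift, subst, iht, ihu]
  | lam t ih =>
    intro d σ
    simp only [lift, subst, ih]
    congr 2
    funext n
    cases n with
    | zero => simp [up]
    | succ n => by_cases h : n < d <;> simp [up, h]
  | sym f => intro d σ; rfl

theorem lift_subst (t : Tm Sig) : ∀ (d : ℕ) (σ : ℕ → Tm Sig),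
    lift d (subst σ t) = subst (fun n => lift d (σ n)) t := by
  induction t with
  | var n => intro d σ; rfl
  | app t u iht ihu => intro d σ; simp [lift, subst, iht, ihu]
  | lam t ih =>
    intro d σ
    simp only [lift, subst, ih]
    congr 2
    funext n
    cases n with
    | zero => simp [up, lift]
    | succ n => simp [up, lift_lift (σ n) 0 d (Nat.zero_le _)]
  | sym f => intro d σ; rfl

theorem subst_subst (t : Tm Sig) : ∀ (σ τ : ℕ → Tm Sig),
    subst τ (subst σ t) = subst (fun n => subst τ (σ n)) t := by
  induction t with
  | var n => intro σ τ; rfl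
  | app t u iht ihu => intro σ τ; simp [subst, iht, ihu]
  | lam t ih =>
    intro σ τ
    simp only [subst, ih]
    congr 2
    funext n
    cases n with
    | zero => simp [up, subst]
    | succ n => simp [up, subst_lift, lift_subst]
  | sym f => intro σ τ; rfl

theorem subst_var (t : Tm Sig) : subst var t = t := by
  have hup : up (var : ℕ → Tm Sig) = var := by
    funext n; cases n <;> simp [up, lift]
  induction t with
  | var n => rfl
  | app t u iht ihu => simp [subst, iht, ihu]
  | lam t ih => simp [subst, hup, ih]
  | sym f => rfl

theorem subst_subst1 (σ : ℕ → Tm Sig) (u t : Tm Sig) :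
    subst σ (subst1 u t) = subst1 (subst σ u) (subst (up σ) t) := by
  simp only [subst1, subst_subst]
  congr 1
  funext n
  cases n with
  | zero => simp [scons, up, subst]
  | succ n => simp [scons, up, subst, subst_lift, subst_var]

/-! ### β-reduction without the substitution clause -/

/-- β-reduction as the closure of the β-rule under term contexts only. -/
inductive BetaC : Tm Sig → Tm Sig → Prop
  | beta (t u : Tm Sig) : BetaC (app (lam t) u) (subst1 u t)
  | abs {t u : Tm Sig} : BetaC t u → BetaC (lam t) (lam u)
  | appL {t u v : Tm Sig} : BetaC t u → BetaC (app t v) (app u v)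
  | appR {t u v : Tm Sig} : BetaC t u → BetaC (app v t) (app v u)

theorem BetaC.substC {t u : Tm Sig} (h : BetaC t u) :
    ∀ σ : ℕ → Tm Sig, BetaC (subst σ t) (subst σ u) := by
  induction h with
  | beta t u => intro σ; rw [subst_subst1]; exact .beta _ _
  | abs _ ih => intro σ; exact .abs (ih _)
  | appL _ ih => intro σ; exact .appL (ih _)
  | appR _ ih => intro σ; exact .appR (ih _)

theorem beta_iff {t u : Tm Sig} : Beta t u ↔ BetaC t u := by
  constructor
  · intro h
    induction h with
    | beta t u => exact .beta t u
    | abs _ ih => exact .abs ih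
    | appL _ ih => exact .appL ih
    | appR _ ih => exact .appR ih
    | substC σ _ ih => exact ih.substC σ
  · intro h
    induction h with
    | beta t u => exact .beta t u
    | abs _ ih => exact .abs ih
    | appL _ ih => exact .appL ih
    | appR _ ih => exact .appR ih

/-! ### Weak head reduction and standard reduction -/

theorem HeadAux.substC {t u : Tm Sig} (h : HeadAux t u) (σ : ℕ → Tm Sig) :
    HeadAux (subst σ t) (subst σ u) := by
  induction h with
  | beta b a => rw [subst_subst1]; exact .beta _ _
  | app v _ ih => exact .app _ ih

/-- Finitely many weak head steps (no step under a leading abstraction). -/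
abbrev WH : Tm Sig → Tm Sig → Prop := ReflTransGen HeadAux

theorem WH.substC {t u : Tm Sig} (h : WH t u) (σ : ℕ → Tm Sig) :
    WH (subst σ t) (subst σ u) :=
  ReflTransGen.lift (subst σ) (fun _ _ h => HeadAux.substC h σ) _ _ h

theorem WH.app {t u : Tm Sig} (h : WH t u) (v : Tm Sig) : WH (app t v) (app u v) :=
  ReflTransGen.lift (fun x => Tm.app x v) (fun _ _ h => HeadAux.app v h) _ _ h

/-- Standard reduction, in Kashima's inductive form: weak head steps, then standard reductions
inside the immediate components of the term reached. -/
inductive St : Tm Sig → Tm Sig → Prop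
  | var {t : Tm Sig} {n : ℕ} : WH t (var n) → St t (var n)
  | sym {t : Tm Sig} {f : Sig} : WH t (sym f) → St t (sym f)
  | app {t a b c d : Tm Sig} : WH t (app a b) → St a c → St b d → St t (app c d)
  | lam {t a b : Tm Sig} : WH t (lam a) → St a b → St t (lam b)

theorem St.refl (t : Tm Sig) : St t t := by
  induction t with
  | var n => exact .var .refl
  | app t u iht ihu => exact .app .refl iht ihu
  | lam t ih => exact .lam .refl ih
  | sym f => exact .sym .refl

theorem St.head {s t u : Tm Sig} (h : WH s t) (h' : St t u) : St s u := by
  cases h' with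
  | var k => exact .var (h.trans k)
  | sym k => exact .sym (h.trans k)
  | app k a b => exact .app (h.trans k) a b
  | lam k a => exact .lam (h.trans k) a

theorem St.lift {t u : Tm Sig} (h : St t u) : ∀ d, St (Tm.lift d t) (Tm.lift d u) := by
  have key : ∀ {t u : Tm Sig} (d : ℕ), WH t u → WH (Tm.lift d t) (Tm.lift d u) := by
    intro t u d h
    rw [lift_eq_subst, lift_eq_subst]
    exact h.substC _
  induction h with
  | var k => intro d; exact St.head (key d k) (St.refl _)
  | sym k => intro d; exact St.head (key d k) (St.refl _)
  | app k _ _ iha ihb => intro d; exact .app (key d k) (iha d) (ihb d)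
  | lam k _ ih => intro d; exact .lam (key d k) (ih (d + 1))

theorem St.subst {t u : Tm Sig} (h : St t u) : ∀ σ τ : ℕ → Tm Sig,
    (∀ n, St (σ n) (τ n)) → St (Tm.subst σ t) (Tm.subst τ u) := by
  induction h with
  | @var t n k => intro σ τ hs; exact St.head (k.substC σ) (hs n)
  | sym k => intro σ τ _; exact .sym (k.substC σ)
  | app k _ _ iha ihb => intro σ τ hs; exact .app (k.substC σ) (iha σ τ hs) (ihb σ τ hs)
  | lam k _ ih =>
    intro σ τ hs
    refine .lam (k.substC σ) (ih _ _ ?_)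
    intro n
    cases n with
    | zero => exact St.refl _
    | succ n => exact (hs n).lift 0

/-- A standard reduction followed by a β-step can be rearranged into a standard reduction. -/
theorem St.step {u v : Tm Sig} (h : BetaC u v) : ∀ {t : Tm Sig}, St t u → St t v := by
  induction h with
  | beta m n =>
    intro t ht
    cases ht with
    | app k ha hb =>
      cases ha with
      | lam k' ha' =>
        refine St.head ((k.trans (WH.app k' _)).tail (HeadAux.beta _ _)) ?_
        refine ha'.subst _ _ ?_
        intro i
        cases i with
        | zero => exact hb
        | succ i => exact St.refl _
  | abs _ ih =>
    intro t ht
    cases ht with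
    | lam k ha => exact .lam k (ih ha)
  | appL _ ih =>
    intro t ht
    cases ht with
    | app k ha hb => exact .app k (ih ha) hb
  | appR _ ih =>
    intro t ht
    cases ht with
    | app k ha hb => exact .app k ha (ih hb)

/-- Standardization. -/
theorem St.of_beta {t u : Tm Sig} (h : ReflTransGen Beta t u) : St t u := by
  induction h with
  | refl => exact St.refl _
  | tail _ hs ih => exact ih.step (beta_iff.1 hs)

/-! ### Head normal forms -/

/-- A variable or a function symbol. -/
def IsHead (h : Tm Sig) : Prop := (∃ n, h = var n) ∨ ∃ f, h = sym f

/-- Recovers the arguments of a head normal form; on other terms the value is irrelevant. -/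
def spineArgs : Tm Sig → List (Tm Sig)
  | app t u => spineArgs t ++ [u]
  | lam t => spineArgs t
  | _ => []

theorem spineArgs_appList (as : List (Tm Sig)) : ∀ h : Tm Sig,
    spineArgs (appList h as) = spineArgs h ++ as := by
  induction as with
  | nil => intro h; simp [appList]
  | cons a as ih => intro h; simp [appList, ih, spineArgs]

theorem spineArgs_hnf {h : Tm Sig} (hh : IsHead h) (m : ℕ) (as : List (Tm Sig)) :
    spineArgs (lamN m (appList h as)) = as := by
  induction m with
  | zero =>
    rcases hh with ⟨n, rfl⟩ | ⟨f, rfl⟩ <;> simp [lamN, spineArgs_appList, spineArgs]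
  | succ m ih => simpa [lamN, spineArgs] using ih

theorem appList_concat (as : List (Tm Sig)) (a : Tm Sig) : ∀ h : Tm Sig,
    appList h (as ++ [a]) = app (appList h as) a := by
  induction as with
  | nil => intro h; rfl
  | cons b as ih => intro h; simp [appList, ih]

theorem appList_ne_lam {h : Tm Sig} (hh : IsHead h) (as : List (Tm Sig)) (b : Tm Sig) :
    appList h as ≠ lam b := by
  induction as using List.reverseRecOn with
  | nil => rcases hh with ⟨n, rfl⟩ | ⟨f, rfl⟩ <;> simp [appList]
  | append_singleton as a _ => simp [appList_concat]

theorem not_headAux_lam {b u : Tm Sig} : ¬ HeadAux (lam b) u := by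
  intro h; cases h

theorem not_headAux_appList {h : Tm Sig} (hh : IsHead h) (as : List (Tm Sig)) :
    ∀ u, ¬ HeadAux (appList h as) u := by
  induction as using List.reverseRecOn with
  | nil =>
    intro u hu
    rcases hh with ⟨n, rfl⟩ | ⟨f, rfl⟩ <;> cases hu
  | append_singleton as a ih =>
    intro u hu
    rw [appList_concat] at hu
    generalize hx : appList h as = x at hu
    cases hu with
    | beta b _ => exact appList_ne_lam hh as b hx
    | app _ k => exact ih _ (hx ▸ k)

theorem headAux_det {t u v : Tm Sig} (h : HeadAux t u) : HeadAux t v → u = v := by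
  induction h generalizing v with
  | beta b a =>
    intro k
    cases k with
    | beta => rfl
    | app _ k => exact absurd k not_headAux_lam
  | app w k ih =>
    intro k'
    cases k' with
    | beta => exact absurd k not_headAux_lam
    | app _ k' => rw [ih k']

theorem wadsworth (t : Tm Sig) : (∃ u, HeadRed t u) ∨
    ∃ m h as, IsHead h ∧ t = lamN m (appList h as) := by
  induction t with
  | var n => exact .inr ⟨0, var n, [], .inl ⟨n, rfl⟩, rfl⟩
  | sym f => exact .inr ⟨0, sym f, [], .inr ⟨f, rfl⟩, rfl⟩
  | lam t ih =>
    rcases ih with ⟨u, hu⟩ | ⟨m, h, as, hh, rfl⟩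
    · exact .inl ⟨_, .lam hu⟩
    · exact .inr ⟨m + 1, h, as, hh, rfl⟩
  | app t a ih _ =>
    rcases ih with ⟨u, hu⟩ | ⟨m, h, as, hh, rfl⟩
    · cases hu with
      | base k => exact .inl ⟨_, .base (.app a k)⟩
      | lam _ => exact .inl ⟨_, .base (.beta _ _)⟩
    · cases m with
      | zero => exact .inr ⟨0, h, as ++ [a], hh, (appList_concat as a h).symm⟩
      | succ m => exact .inl ⟨_, .base (.beta _ _)⟩

/-! ### Weakly normalizing terms are accessible -/

/-- Accessibility for `≻`: every chain `t ≻ t₁ ≻ t₂ ≻ …` is finite. -/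
abbrev SN (t : Tm Sig) : Prop := Acc (fun x y : Tm Sig => SuccRel y x) t

/-- A weak head step is the only `≻`-step out of its source, so accessibility is reflected. -/
theorem SN.expand {t t' : Tm Sig} (h : HeadAux t t') (h' : SN t') : SN t := by
  refine Acc.intro _ ?_
  rintro u (⟨m, v, as, hv, -, rfl, -⟩ | hu)
  · cases m with
    | zero => exact absurd h (not_headAux_appList hv as _)
    | succ m => exact absurd h not_headAux_lam
  · cases hu with
    | base k => exact headAux_det h k ▸ h'
    | lam _ => exact absurd h not_headAux_lam

theorem SN.expands {t t' : Tm Sig} (h : WH t t') (h' : SN t') : SN t := by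
  induction h using ReflTransGen.head_induction_on with
  | refl => exact h'
  | head k _ ih => exact SN.expand k ih

theorem SN.lam {t : Tm Sig} (h : SN t) : SN (lam t) := by
  induction h with
  | intro t ht ih =>
    refine Acc.intro _ ?_
    rintro u (⟨m, v, as, hv, hne, he, hu⟩ | hu)
    · cases m with
      | zero => exact absurd he.symm (appList_ne_lam hv as t)
      | succ m =>
        -- `λ` does not change the arguments of a head normal form
        exact ht u (.inl ⟨m, v, as, hv, hne, by simpa [lamN] using he, hu⟩)
    · cases hu with
      | base k => exact absurd k not_headAux_lam
      | lam k => exact ih _ (.inr k)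

theorem SN.appList {h : Tm Sig} (hh : IsHead h) {as : List (Tm Sig)}
    (has : ∀ a ∈ as, SN a) : SN (appList h as) := by
  refine Acc.intro _ ?_
  rintro u (⟨m, v, bs, hv, -, he, hu⟩ | hu)
  · have h1 := spineArgs_hnf hh 0 as
    have h2 := spineArgs_hnf hv m bs
    have : as = bs := by rw [← h1, ← h2, ← he]; rfl
    exact has u (this ▸ hu)
  · generalize hx : Tm.appList h as = x at hu
    cases hu with
    | base k => exact absurd (hx ▸ k) (not_headAux_appList hh as _)
    | lam _ => exact absurd hx (appList_ne_lam hh as _)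

/-- A term standardly reducing to a normal form is accessible. The second component is what makes
the induction go through for applications `c d`, in which `c` is normal and not an abstraction. -/
theorem St.acc {t n : Tm Sig} (h : St t n) : (∀ u, ¬ BetaC n u) →
    SN t ∧ ((∀ b, n ≠ Tm.lam b) →
      ∃ v as, IsHead v ∧ WH t (Tm.appList v as) ∧ ∀ a ∈ as, SN a) := by
  -- for a normal form that is not an abstraction the second component yields the first
  have key : ∀ {t : Tm Sig}, (∃ v as, IsHead v ∧ WH t (Tm.appList v as) ∧ ∀ a ∈ as, SN a) →
      SN t := by
    rintro t ⟨v, as, hv, k, has⟩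
    exact SN.expands k (SN.appList hv has)
  induction h with
  | @var t n k =>
    intro _
    have : ∃ v as, IsHead v ∧ WH t (Tm.appList v as) ∧ ∀ a ∈ as, SN a :=
      ⟨Tm.var n, [], .inl ⟨n, rfl⟩, k, by simp⟩
    exact ⟨key this, fun _ => this⟩
  | @sym t f k =>
    intro _
    have : ∃ v as, IsHead v ∧ WH t (Tm.appList v as) ∧ ∀ a ∈ as, SN a :=
      ⟨Tm.sym f, [], .inr ⟨f, rfl⟩, k, by simp⟩
    exact ⟨key this, fun _ => this⟩
  | @app t a b c d k _ _ iha ihb =>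
    intro hn
    have hc : ∀ e, c ≠ Tm.lam e := by
      rintro e rfl
      exact hn _ (.beta _ _)
    obtain ⟨v, as, hv, k', has⟩ := (iha fun u hu => hn _ (.appL hu)).2 hc
    have hb := (ihb fun u hu => hn _ (.appR hu)).1
    have : ∃ v as, IsHead v ∧ WH t (Tm.appList v as) ∧ ∀ a ∈ as, SN a := by
      refine ⟨v, as ++ [b], hv, ?_, ?_⟩
      · rw [appList_concat]
        exact k.trans (WH.app k' b)
      · intro x hx
        rcases List.mem_append.1 hx with hx | hx
        · exact has x hx
        · rw [List.mem_singleton.1 hx]; exact hb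
    exact ⟨key this, fun _ => this⟩
  | @lam t a b k _ ih =>
    intro hn
    exact ⟨SN.expands k (SN.lam (ih fun u hu => hn _ (.abs hu)).1), fun hb => absurd rfl (hb b)⟩

theorem acc_of_wn {t : Tm Sig} : WNbeta t → SN t := by
  rintro ⟨n, h, hn⟩
  exact ((St.of_beta h).acc fun u hu => hn u (beta_iff.2 hu)).1

/-! ### Accessible terms are weakly normalizing -/

theorem HeadRed.beta {t u : Tm Sig} (h : HeadRed t u) : Beta t u := by
  induction h with
  | base k =>
    induction k with
    | beta b a => exact .beta _ _
    | app v _ ih => exact .appL ih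
  | lam _ ih => exact .abs ih

theorem wn_lamN {t : Tm Sig} (h : WNbeta t) (m : ℕ) : WNbeta (lamN m t) := by
  induction m with
  | zero => exact h
  | succ m ih =>
    obtain ⟨n, hn, hnf⟩ := ih
    refine ⟨lam n, ReflTransGen.lift lam (fun _ _ h => Beta.abs h) _ _ hn, ?_⟩
    intro u hu
    cases beta_iff.1 hu with
    | abs k => exact hnf _ (beta_iff.2 k)

/-- The normal form obtained is not an abstraction, so that applying it creates no redex. -/
theorem wn_appList {h : Tm Sig} (hh : IsHead h) (as : List (Tm Sig)) :
    (∀ a ∈ as, WNbeta a) → ∃ n, IsBnf (appList h as) n ∧ ∀ b, n ≠ lam b := by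
  induction as using List.reverseRecOn with
  | nil =>
    intro _
    refine ⟨h, ⟨.refl, ?_⟩, appList_ne_lam hh []⟩
    intro u hu
    have := beta_iff.1 hu
    rcases hh with ⟨n, rfl⟩ | ⟨f, rfl⟩ <;> cases this
  | append_singleton as a ih =>
    intro has
    obtain ⟨n, ⟨hn, hnf⟩, hl⟩ := ih fun x hx => has x (by simp [hx])
    obtain ⟨n', hn', hnf'⟩ := has a (by simp)
    refine ⟨app n n', ⟨?_, ?_⟩, by simp⟩
    · rw [appList_concat]
      exact (ReflTransGen.lift (fun x => app x a) (fun _ _ h => Beta.appL h) _ _ hn).trans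
        (ReflTransGen.lift (fun x => app n x) (fun _ _ h => Beta.appR h) _ _ hn')
    · intro u hu
      cases beta_iff.1 hu with
      | beta b _ => exact hl b rfl
      | appL k => exact hnf _ (beta_iff.2 k)
      | appR k => exact hnf' _ (beta_iff.2 k)

theorem wn_of_acc {t : Tm Sig} (h : SN t) : WNbeta t := by
  induction h with
  | intro t _ ih =>
    rcases wadsworth t with ⟨u, hu⟩ | ⟨m, v, as, hv, rfl⟩
    · obtain ⟨n, hn, hnf⟩ := ih u (.inr hu)
      exact ⟨n, .head (HeadRed.beta hu) hn, hnf⟩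
    · refine wn_lamN ?_ m
      obtain ⟨n, hn, -⟩ := wn_appList hv as fun a ha =>
        ih a (.inl ⟨m, v, as, hv, List.ne_nil_of_mem ha, rfl, ha⟩)
      exact ⟨n, hn⟩

end SuccWF

/-- `WN_β` is closed under `≻`, and `≻` is well-founded on `WN_β`. -/
theorem succRel_wf_on_WN (Sig : Type) :
    (∀ s t : Tm Sig, WNbeta s → SuccRel s t → WNbeta t) ∧
    (∀ s : Tm Sig, WNbeta s → Acc (fun x y : Tm Sig => SuccRel y x) s) := by
  exact ⟨fun s t hs hst => SuccWF.wn_of_acc ((SuccWF.acc_of_wn hs).inv hst),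
    fun s hs => SuccWF.acc_of_wn hs⟩
end
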